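/- arXiv:2509.04879 — 2 statements merged into one kernel-verified Lean document; each statement's English description precedes it below -/
import Mathlib

section
/- Let μ be the normalized Haar measure on the circle 𝕋 = AddCircle (2π), let L² = L²(𝕋, μ; ℂ), and let H² = {g ∈ L² : the n-th Fourier coefficient of g vanishes for every integer n < 0}. Let φ : 𝕋 → ℂ be measurable with |φ(x)| ≤ r for μ-a.e. x, for some r < 1. Then for every f ∈ H², the family (φⁿ · f)_{n∈ℕ} of a.e. pointwise products is not a frame for H²: no positive lower frame bound exists. -/
open MeasureTheory Real ComplexConjugate

instance : Fact (0 < 2 * Real.pi) := ⟨by positivity⟩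

/-- The normalized Haar (probability) measure on the circle `𝕋 = AddCircle (2π)`. -/
noncomputable def μC : Measure (AddCircle (2 * Real.pi)) := AddCircle.haarAddCircle

/-!
The functions `φⁿ f` satisfy `‖φⁿ f‖ ≤ rⁿ ‖f‖`, so `∑ ‖φⁿ f‖² < ∞`. No square-summable family
`(fₙ)` has a lower frame bound on an infinite-dimensional subspace `V`: for every `N` some nonzero
`g ∈ V` is orthogonal to `f₀, …, f_{N-1}`, and then Cauchy–Schwarz gives
`∑ |⟨g, fₙ⟩|² ≤ ‖g‖² ∑_{n ≥ N} ‖fₙ‖²`, where the tail is arbitrarily small.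
-/

section InnerProductSpace

variable {ι 𝕜 E : Type*} [RCLike 𝕜] [NormedAddCommGroup E] [InnerProductSpace 𝕜 E]
  {V : Submodule 𝕜 E}

theorem exists_mem_ne_zero_forall_inner_eq_zero (hV : ¬ FiniteDimensional 𝕜 V) (f : ι → E)
    (s : Finset ι) : ∃ g ∈ V, g ≠ 0 ∧ ∀ i ∈ s, inner 𝕜 (f i) g = 0 := by
  let L : V →ₗ[𝕜] s → 𝕜 := LinearMap.pi fun i ↦ (innerₛₗ 𝕜 (f i)).domRestrict V
  have hL : LinearMap.ker L ≠ ⊥ := fun h ↦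
    hV (FiniteDimensional.of_injective L (LinearMap.ker_eq_bot.mp h))
  obtain ⟨g, hgL, hg⟩ := Submodule.exists_mem_ne_zero_of_ne_bot hL
  exact ⟨g, g.2, by simpa using hg, fun i hi ↦ congrFun hgL ⟨i, hi⟩⟩

theorem tsum_sq_norm_inner_le_of_forall_inner_eq_zero {f : ι → E}
    (hf : Summable fun i ↦ ‖f i‖ ^ 2) {s : Finset ι} {g : E}
    (hg : ∀ i ∈ s, inner 𝕜 (f i) g = 0) :
    ∑' i, ‖inner 𝕜 (f i) g‖ ^ 2 ≤ (∑' i : {i // i ∉ s}, ‖f i‖ ^ 2) * ‖g‖ ^ 2 := by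
  have hle (i : ι) : ‖inner 𝕜 (f i) g‖ ^ 2 ≤ ‖f i‖ ^ 2 * ‖g‖ ^ 2 := by
    rw [← mul_pow]
    gcongr
    exact norm_inner_le_norm _ _
  have hsum : Summable fun i ↦ ‖inner 𝕜 (f i) g‖ ^ 2 :=
    (hf.mul_right _).of_nonneg_of_le (fun _ ↦ by positivity) hle
  have hzero : ∑ i ∈ s, ‖inner 𝕜 (f i) g‖ ^ 2 = 0 :=
    Finset.sum_eq_zero fun i hi ↦ by rw [hg i hi, norm_zero, zero_pow two_ne_zero]
  calc ∑' i, ‖inner 𝕜 (f i) g‖ ^ 2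
      = ∑' i : {i // i ∉ s}, ‖inner 𝕜 (f i) g‖ ^ 2 := by
        rw [← hsum.sum_add_tsum_subtype_compl s, hzero, zero_add]
    _ ≤ ∑' i : {i // i ∉ s}, ‖f i‖ ^ 2 * ‖g‖ ^ 2 :=
        (hsum.subtype _).tsum_le_tsum (fun i ↦ hle i) ((hf.mul_right _).subtype _)
    _ = (∑' i : {i // i ∉ s}, ‖f i‖ ^ 2) * ‖g‖ ^ 2 := tsum_mul_right

theorem exists_mem_tsum_sq_norm_inner_lt (hV : ¬ FiniteDimensional 𝕜 V) {f : ι → E}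
    (hf : Summable fun i ↦ ‖f i‖ ^ 2) {A : ℝ} (hA : 0 < A) :
    ∃ g ∈ V, ∑' i, ‖inner 𝕜 (f i) g‖ ^ 2 < A * ‖g‖ ^ 2 := by
  obtain ⟨s, hs⟩ : ∃ s : Finset ι, ∑' i : {i // i ∉ s}, ‖f i‖ ^ 2 < A :=
    ((tendsto_tsum_compl_atTop_zero fun i ↦ ‖f i‖ ^ 2).eventually_lt_const hA).exists
  obtain ⟨g, hgV, hg₀, hg⟩ := exists_mem_ne_zero_forall_inner_eq_zero hV f s
  refine ⟨g, hgV, (tsum_sq_norm_inner_le_of_forall_inner_eq_zero hf hg).trans_lt ?_⟩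
  have : 0 < ‖g‖ := norm_pos_iff.mpr hg₀
  gcongr

end InnerProductSpace

section PowSMul

variable {α 𝕜 E : Type*} {m : MeasurableSpace α} {μ : Measure α} [NormedField 𝕜]
  [NormedAddCommGroup E] [NormedSpace 𝕜 E] {p : ENNReal} {φ : α → 𝕜} {r : ℝ}

theorem ae_norm_pow_smul_le (hφr : ∀ᵐ x ∂μ, ‖φ x‖ ≤ r) (f : α → E) (n : ℕ) :
    ∀ᵐ x ∂μ, ‖φ x ^ n • f x‖ ≤ r ^ n * ‖f x‖ := by
  filter_upwards [hφr] with x hx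
  rw [norm_smul, norm_pow]
  gcongr

theorem memLp_pow_smul (hφ : AEStronglyMeasurable φ μ) (hφr : ∀ᵐ x ∂μ, ‖φ x‖ ≤ r)
    {f : α → E} (hf : MemLp f p μ) (n : ℕ) : MemLp (fun x ↦ φ x ^ n • f x) p μ :=
  hf.of_le_mul ((hφ.pow n).smul hf.1) (ae_norm_pow_smul_le hφr f n)

theorem summable_sq_norm_toLp_pow_smul (hr₀ : 0 ≤ r) (hr : r < 1)
    (hφr : ∀ᵐ x ∂μ, ‖φ x‖ ≤ r) (f : Lp E p μ)
    (hmem : ∀ n : ℕ, MemLp (fun x ↦ φ x ^ n • f x) p μ) :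
    Summable fun n ↦ ‖(hmem n).toLp‖ ^ 2 := by
  have hle (n : ℕ) : ‖(hmem n).toLp‖ ≤ r ^ n * ‖f‖ := by
    refine Lp.norm_le_mul_norm_of_ae_le_mul ?_
    filter_upwards [(hmem n).coeFn_toLp, ae_norm_pow_smul_le hφr f n] with x hx hxr
    rwa [hx]
  have hgeom : Summable fun n ↦ (r ^ 2) ^ n * ‖f‖ ^ 2 :=
    (summable_geometric_of_lt_one (by positivity) (pow_lt_one₀ hr₀ hr two_ne_zero)).mul_right _
  refine hgeom.of_nonneg_of_le (fun _ ↦ by positivity) fun n ↦ ?_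
  -- `norm_nonneg` needs the normed group structure on `Lp`, which is there only for `1 ≤ p`.
  calc ‖(hmem n).toLp‖ ^ 2 ≤ (r ^ n * ‖f‖) ^ 2 :=
        pow_le_pow_left₀ ENNReal.toReal_nonneg (hle n) 2
    _ = (r ^ 2) ^ n * ‖f‖ ^ 2 := by ring

end PowSMul

theorem inner_toLp_eq_integral_mul_conj {α 𝕜 : Type*} {m : MeasurableSpace α} {μ : Measure α}
    [RCLike 𝕜] {h : α → 𝕜} (hh : MemLp h 2 μ) (g : Lp 𝕜 2 μ) :
    inner 𝕜 hh.toLp g = ∫ x, g x * conj (h x) ∂μ := by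
  rw [L2.inner_def]
  refine integral_congr_ae ?_
  filter_upwards [hh.coeFn_toLp] with x hx
  rw [hx, RCLike.inner_apply]

section HardySpace

variable {T : ℝ} [Fact (0 < T)]

variable (T) in
/-- The Hardy space `H²` of the circle, as the subspace of `L²` of those functions whose Fourier
coefficients of negative index vanish. -/
noncomputable def hardySpace : Submodule ℂ (Lp ℂ 2 (AddCircle.haarAddCircle (T := T))) where
  carrier := {g | ∀ n : ℤ, n < 0 → fourierCoeff g n = 0}
  zero_mem' n _ := by rw [← fourierBasis_repr, map_zero, lp.coeFn_zero, Pi.zero_apply]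
  add_mem' {g h} hg hh n hn := by
    rw [← fourierBasis_repr, map_add, lp.coeFn_add, Pi.add_apply, fourierBasis_repr,
      fourierBasis_repr, hg n hn, hh n hn, add_zero]
  smul_mem' c g hg n hn := by
    rw [← fourierBasis_repr, map_smul, lp.coeFn_smul, Pi.smul_apply, fourierBasis_repr,
      hg n hn, smul_zero]

theorem fourierLp_natCast_mem_hardySpace (k : ℕ) : fourierLp 2 (k : ℤ) ∈ hardySpace T := by
  intro n hn
  rw [← fourierBasis_repr, ← coe_fourierBasis, HilbertBasis.repr_self, lp.single_apply_ne]
  lia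

theorem not_finiteDimensional_hardySpace : ¬ FiniteDimensional ℂ (hardySpace T) := by
  intro _
  let e (k : ℕ) : hardySpace T := ⟨fourierLp 2 (k : ℤ), fourierLp_natCast_mem_hardySpace k⟩
  have he : LinearIndependent ℂ e := .of_comp (hardySpace T).subtype <|
    orthonormal_fourier.linearIndependent.comp _ Nat.cast_injective
  exact Infinite.not_finite he.finite

end HardySpace

theorem stmt12_general {α 𝕜 : Type*} {m : MeasurableSpace α} {μ : Measure α} [RCLike 𝕜]
    {φ : α → 𝕜} (hφ : AEStronglyMeasurable φ μ) {r : ℝ} (hr : r < 1)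
    (hφr : ∀ᵐ x ∂μ, ‖φ x‖ ≤ r) (f : Lp 𝕜 2 μ) {V : Submodule 𝕜 (Lp 𝕜 2 μ)}
    (hV : ¬ FiniteDimensional 𝕜 V) :
    ¬ ∃ A : ℝ, 0 < A ∧ ∀ g ∈ V,
      A * ‖g‖ ^ 2 ≤ ∑' n : ℕ, ‖∫ x, g x * conj (φ x ^ n * f x) ∂μ‖ ^ 2 := by
  rintro ⟨A, hA, hlower⟩
  have hφr' : ∀ᵐ x ∂μ, ‖φ x‖ ≤ max r 0 := hφr.mono fun _ hx ↦ hx.trans (le_max_left r 0)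
  have hmem (n : ℕ) : MemLp (fun x ↦ φ x ^ n * f x) 2 μ :=
    memLp_pow_smul hφ hφr (Lp.memLp f) n
  have hsum : Summable fun n ↦ ‖(hmem n).toLp‖ ^ 2 :=
    summable_sq_norm_toLp_pow_smul (le_max_right r 0) (max_lt hr one_pos) hφr' f hmem
  obtain ⟨g, hgV, hg⟩ := exists_mem_tsum_sq_norm_inner_lt hV hsum hA
  simp_rw [inner_toLp_eq_integral_mul_conj] at hg
  exact (hlower g hgV).not_gt hg

theorem stmt12 (φ : AddCircle (2 * Real.pi) → ℂ) (hφmeas : Measurable φ)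
    (r : ℝ) (hr : r < 1) (hφr : ∀ᵐ x ∂μC, ‖φ x‖ ≤ r)
    (f : Lp ℂ 2 μC)
    (hf : ∀ n : ℤ, n < 0 → fourierCoeff (f : AddCircle (2 * Real.pi) → ℂ) n = 0) :
    ¬ ∃ A : ℝ, 0 < A ∧ ∀ g : Lp ℂ 2 μC,
      (∀ n : ℤ, n < 0 → fourierCoeff (g : AddCircle (2 * Real.pi) → ℂ) n = 0) →
      A * ‖g‖ ^ 2 ≤ ∑' n : ℕ,
        ‖∫ x, (g : AddCircle (2 * Real.pi) → ℂ) x *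
          conj (φ x ^ n * (f : AddCircle (2 * Real.pi) → ℂ) x) ∂μC‖ ^ 2 := by
  exact stmt12_general hφmeas.aestronglyMeasurable hr hφr f not_finiteDimensional_hardySpace
end

section
/- Let μ be the normalized Haar measure on the circle 𝕋 = AddCircle (2π), let L² = L²(𝕋, μ; ℂ), and let H² = {g ∈ L² : the n-th Fourier coefficient of g vanishes for every integer n < 0}. Let φ : 𝕋 → ℂ be a bounded measurable function whose Fourier coefficients vanish for all integers n < 0, and let f ∈ H². If the family (φⁿ · f)_{n∈ℕ} of a.e. pointwise products is a frame for H², then the holomorphic extension of f has no zeros in the open unit disk: for every z₀ ∈ ℂ with |z₀| < 1, the sum ∑_{n=0}^∞ (n-th Fourier coefficient of f) · z₀ⁿ is nonzero. -/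
/-!
Convolution of Fourier coefficients makes evaluation at a point `z` of the disk multiplicative on
products of functions of analytic type: `(φⁿ f)(z) = φ(z)ⁿ f(z)`. If `f(z) = 0`, every `φⁿ f`
therefore vanishes at `z`, i.e. is orthogonal to the Szegő kernel at `z`, a nonzero element of `H²`.
So the family is not even complete in `H²`, let alone a frame.
-/

open MeasureTheory Real ComplexConjugate

section FourierCoefficients

open AddCircle

variable {T : ℝ} [Fact (0 < T)]

theorem norm_fourierCoeff_le_integral_norm {E : Type*} [NormedAddCommGroup E] [NormedSpace ℂ E]
    (u : AddCircle T → E) (n : ℤ) :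
    ‖fourierCoeff u n‖ ≤ ∫ x, ‖u x‖ ∂haarAddCircle :=
  calc ‖fourierCoeff u n‖ ≤ ∫ x, ‖fourier (-n) x • u x‖ ∂haarAddCircle :=
        norm_integral_le_integral_norm _
    _ = ∫ x, ‖u x‖ ∂haarAddCircle := by
        simp only [norm_smul, fourier_apply, Circle.norm_coe, one_mul]

theorem summable_norm_fourierCoeff_mul_pow (u : AddCircle T → ℂ) {z : ℂ} (hz : ‖z‖ < 1) :
    Summable fun n : ℕ ↦ ‖fourierCoeff u n * z ^ n‖ := by
  refine .of_nonneg_of_le (fun _ ↦ norm_nonneg _) (fun n ↦ ?_)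
    ((summable_geometric_of_lt_one (norm_nonneg z) hz).mul_left (∫ x, ‖u x‖ ∂haarAddCircle))
  rw [norm_mul, norm_pow]
  gcongr
  exact norm_fourierCoeff_le_integral_norm u n

theorem inner_toLp_toLp_eq_integral {α 𝕜 : Type*} [MeasurableSpace α] [RCLike 𝕜] {μ : Measure α}
    {u v : α → 𝕜} (hu : MemLp u 2 μ) (hv : MemLp v 2 μ) :
    inner 𝕜 (hu.toLp u) (hv.toLp v) = ∫ x, conj (u x) * v x ∂μ := by
  rw [L2.inner_def]
  refine integral_congr_ae ?_
  filter_upwards [hu.coeFn_toLp, hv.coeFn_toLp] with x hux hvx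
  rw [hux, hvx, RCLike.inner_apply']

theorem inner_fourierLp (g : Lp ℂ 2 (haarAddCircle (T := T))) (n : ℤ) :
    inner ℂ (fourierLp 2 n) g = fourierCoeff g n := by
  rw [← fourierBasis_repr, HilbertBasis.repr_apply_apply, coe_fourierBasis]

theorem memLp_fourier (n : ℤ) (p : ENNReal) :
    MemLp (fourier n : AddCircle T → ℂ) p haarAddCircle :=
  (map_continuous (fourier n)).memLp_of_hasCompactSupport (.of_compactSpace _)

theorem hasSum_fourierCoeff_mul {u v : AddCircle T → ℂ}
    (hu : MemLp u 2 haarAddCircle) (hv : MemLp v 2 haarAddCircle) (n : ℤ) :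
    HasSum (fun k ↦ fourierCoeff u k * fourierCoeff v (n - k))
      (fourierCoeff (fun x ↦ u x * v x) n) := by
  have hw : MemLp (fun x ↦ conj (v x) * fourier n x) 2 haarAddCircle :=
    (memLp_fourier n ⊤).mul hv.star
  have inner_w {y : AddCircle T → ℂ} (hy : MemLp y 2 haarAddCircle) :
      inner ℂ hw.toLp hy.toLp = fourierCoeff (fun x ↦ y x * v x) n := by
    rw [inner_toLp_toLp_eq_integral, fourierCoeff]
    congr! 2
    rw [map_mul, Complex.conj_conj, ← fourier_neg, smul_eq_mul]
    ring
  have inner_w_fourier (k : ℤ) : inner ℂ hw.toLp (fourierLp 2 k) = fourierCoeff v (n - k) := by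
    refine (inner_w (memLp_fourier k 2)).trans ?_
    rw [fourierCoeff, fourierCoeff]
    congr! 2 with x
    rw [neg_sub, sub_eq_neg_add, fourier_add, smul_eq_mul, smul_eq_mul, mul_assoc]
  have parseval := fourierBasis.hasSum_inner_mul_inner hw.toLp hu.toLp
  simpa only [coe_fourierBasis, inner_w_fourier, inner_fourierLp, inner_w hu,
    fourierCoeff_congr_ae hu.coeFn_toLp, mul_comm (fourierCoeff v _)] using parseval

end FourierCoefficients

section AnalyticType

open AddCircle Finset

variable {T : ℝ} [Fact (0 < T)] {u v : AddCircle T → ℂ} {z : ℂ}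

/-- A function on the circle is of analytic type if its negative Fourier coefficients vanish; the
Hardy space `H²` consists of the square integrable functions of analytic type. -/
def IsAnalyticType (u : AddCircle T → ℂ) : Prop :=
  ∀ n : ℤ, n < 0 → fourierCoeff u n = 0

/-- The power series `∑ û(n) zⁿ` over `n ≥ 0`; for `u` of analytic type and `‖z‖ < 1` this is the
holomorphic extension of `u` to the unit disk. -/
noncomputable def diskExtension (u : AddCircle T → ℂ) (z : ℂ) : ℂ :=
  ∑' n : ℕ, fourierCoeff u n * z ^ n

theorem IsAnalyticType.mul (hu : MemLp u 2 haarAddCircle) (hv : MemLp v 2 haarAddCircle)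
    (hu_an : IsAnalyticType u) (hv_an : IsAnalyticType v) :
    IsAnalyticType fun x ↦ u x * v x := by
  intro n hn
  rw [← (hasSum_fourierCoeff_mul hu hv n).tsum_eq, ← tsum_zero]
  congr! 2 with k
  rcases lt_or_ge k 0 with hk | hk
  · rw [hu_an k hk, zero_mul]
  · rw [hv_an (n - k) (by lia), mul_zero]

theorem IsAnalyticType.fourierCoeff_mul (hu : MemLp u 2 haarAddCircle)
    (hv : MemLp v 2 haarAddCircle) (hu_an : IsAnalyticType u) (hv_an : IsAnalyticType v) (n : ℕ) :
    fourierCoeff (fun x ↦ u x * v x) n =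
      ∑ kl ∈ antidiagonal n, fourierCoeff u kl.1 * fourierCoeff v kl.2 := by
  have term_eq_zero (k : ℤ) (hk : k ∉ (range (n + 1)).map Nat.castEmbedding) :
      fourierCoeff u k * fourierCoeff v (n - k) = 0 := by
    rcases lt_or_ge k 0 with hk_neg | hk_nonneg
    · rw [hu_an k hk_neg, zero_mul]
    · have hnk : (n : ℤ) < k := by
        lift k to ℕ using hk_nonneg
        simpa using hk
      rw [hv_an (n - k) (by lia), mul_zero]
  rw [← (hasSum_fourierCoeff_mul hu hv n).tsum_eq, tsum_eq_sum term_eq_zero, sum_map,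
    Nat.sum_antidiagonal_eq_sum_range_succ (fun i j : ℕ ↦ fourierCoeff u i * fourierCoeff v j)]
  refine sum_congr rfl fun k hk ↦ ?_
  rw [Nat.castEmbedding_apply, Nat.cast_sub (mem_range_succ_iff.mp hk)]

theorem diskExtension_mul (hu : MemLp u 2 haarAddCircle) (hv : MemLp v 2 haarAddCircle)
    (hu_an : IsAnalyticType u) (hv_an : IsAnalyticType v) (hz : ‖z‖ < 1) :
    diskExtension (fun x ↦ u x * v x) z = diskExtension u z * diskExtension v z := by
  rw [diskExtension, diskExtension, diskExtension,
    tsum_mul_tsum_eq_tsum_sum_antidiagonal_of_summable_norm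
      (summable_norm_fourierCoeff_mul_pow u hz) (summable_norm_fourierCoeff_mul_pow v hz)]
  congr! 2 with n
  rw [hu_an.fourierCoeff_mul hu hv hv_an, sum_mul]
  refine sum_congr rfl fun kl hkl ↦ ?_
  rw [← HasAntidiagonal.mem_antidiagonal.mp hkl, pow_add]
  ring

theorem IsAnalyticType.pow_mul (hu : MemLp u 2 haarAddCircle) (hu_an : IsAnalyticType u)
    (huv : ∀ n : ℕ, MemLp (fun x ↦ u x ^ n * v x) 2 haarAddCircle) (hv_an : IsAnalyticType v)
    (n : ℕ) : IsAnalyticType fun x ↦ u x ^ n * v x := by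
  induction n with
  | zero => simpa only [pow_zero, one_mul] using hv_an
  | succ n ih => simpa only [pow_succ', mul_assoc] using hu_an.mul hu (huv n) ih

theorem diskExtension_pow_mul (hu : MemLp u 2 haarAddCircle) (hu_an : IsAnalyticType u)
    (huv : ∀ n : ℕ, MemLp (fun x ↦ u x ^ n * v x) 2 haarAddCircle) (hv_an : IsAnalyticType v)
    (hz : ‖z‖ < 1) (n : ℕ) :
    diskExtension (fun x ↦ u x ^ n * v x) z = diskExtension u z ^ n * diskExtension v z := by
  induction n with
  | zero => simp only [pow_zero, one_mul]
  | succ n ih =>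
    simpa only [pow_succ', mul_assoc, ih] using
      diskExtension_mul hu (huv n) hu_an (hu_an.pow_mul hu huv hv_an n) hz

theorem diskExtension_fourier_zero (z : ℂ) :
    diskExtension (fourier 0 : AddCircle T → ℂ) z = 1 := by
  rw [diskExtension, tsum_eq_single 0]
  · rw [fourierCoeff_fourier, Nat.cast_zero, Pi.single_eq_same, pow_zero, one_mul]
  · intro n hn
    rw [fourierCoeff_fourier, Pi.single_eq_of_ne (Nat.cast_ne_zero.mpr hn), zero_mul]

theorem diskExtension_fourier_of_neg {n : ℤ} (hn : n < 0) (z : ℂ) :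
    diskExtension (fourier n : AddCircle T → ℂ) z = 0 := by
  rw [diskExtension, ← tsum_zero]
  congr! 2 with m
  rw [fourierCoeff_fourier, Pi.single_eq_of_ne (by lia), zero_mul]

end AnalyticType

section SzegoKernel

open AddCircle

variable {T : ℝ} [Fact (0 < T)] {z : ℂ}

variable (T) in
/-- The Szegő kernel `∑ (conj z)ⁿ eₙ = 1 / (1 - conj z * e₁)`, where `eₙ = fourier n`: the
reproducing kernel of `H²` at the point `z` of the unit disk. For `1 ≤ ‖z‖` the series diverges and
the value is junk. -/
noncomputable def szegoKernel (z : ℂ) : Lp ℂ 2 (haarAddCircle (T := T)) :=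
  ∑' n : ℕ, conj z ^ n • fourierLp 2 (n : ℤ)

theorem summable_szegoKernel (hz : ‖z‖ < 1) :
    Summable fun n : ℕ ↦ conj z ^ n • fourierLp (T := T) 2 (n : ℤ) := by
  refine .of_norm ?_
  have norm_fourierLp (n : ℤ) : ‖fourierLp (T := T) 2 n‖ = 1 := orthonormal_fourier.norm_eq_one n
  simpa only [norm_smul, norm_fourierLp, mul_one, norm_pow, RCLike.norm_conj] using
    summable_geometric_of_lt_one (norm_nonneg z) hz

theorem inner_szegoKernel (hz : ‖z‖ < 1) (g : Lp ℂ 2 (haarAddCircle (T := T))) :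
    inner ℂ (szegoKernel T z) g = diskExtension g z := by
  rw [szegoKernel, diskExtension, ← inner_conj_symm, ← innerSL_apply_apply ℂ,
    (innerSL ℂ g).map_tsum (summable_szegoKernel hz), Complex.conj_tsum]
  congr! 2 with n
  rw [map_smul, innerSL_apply_apply, smul_eq_mul, map_mul, inner_conj_symm, inner_fourierLp,
    map_pow, Complex.conj_conj, mul_comm]

theorem fourierCoeff_szegoKernel (hz : ‖z‖ < 1) (n : ℤ) :
    fourierCoeff (szegoKernel T z) n = conj (diskExtension (fourier n : AddCircle T → ℂ) z) := by
  rw [← inner_fourierLp, ← inner_conj_symm, inner_szegoKernel hz, diskExtension, diskExtension,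
    fourierCoeff_congr_ae (coeFn_fourierLp 2 n)]

theorem isAnalyticType_szegoKernel (hz : ‖z‖ < 1) : IsAnalyticType (szegoKernel T z) := by
  intro n hn
  rw [fourierCoeff_szegoKernel hz, diskExtension_fourier_of_neg hn, map_zero]

theorem szegoKernel_ne_zero (hz : ‖z‖ < 1) : szegoKernel T z ≠ 0 := by
  intro h
  have hcoeff := fourierCoeff_szegoKernel (T := T) hz 0
  rw [diskExtension_fourier_zero, map_one, ← inner_fourierLp, h, inner_zero_right] at hcoeff
  exact zero_ne_one hcoeff

theorem integral_szegoKernel_mul_conj (hz : ‖z‖ < 1) {u : AddCircle T → ℂ}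
    (hu : MemLp u 2 haarAddCircle) :
    ∫ x, szegoKernel T z x * conj (u x) ∂haarAddCircle = conj (diskExtension u z) := by
  rw [diskExtension, ← fourierCoeff_congr_ae hu.coeFn_toLp, ← diskExtension,
    ← inner_szegoKernel hz, L2.inner_def, ← integral_conj]
  refine integral_congr_ae ?_
  filter_upwards [hu.coeFn_toLp] with x hux
  rw [inner_conj_symm, RCLike.inner_apply, hux]

end SzegoKernel

theorem memLp_pow_mul {α 𝕜 : Type*} [MeasurableSpace α] [NormedRing 𝕜]
    {μ : Measure α} {p : ENNReal} {u v : α → 𝕜} (hu : MemLp u ⊤ μ) (hv : MemLp v p μ) (n : ℕ) :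
    MemLp (fun x ↦ u x ^ n * v x) p μ := by
  induction n with
  | zero => simpa only [pow_zero, one_mul] using hv
  | succ n ih => simpa only [pow_succ', mul_assoc] using ih.mul' hu

theorem eq_zero_of_mul_sq_norm_le_tsum {ι E F : Type*} [NormedAddCommGroup E]
    [SeminormedAddCommGroup F] {c : ι → F} {A : ℝ} {g : E} (hA : 0 < A)
    (hle : A * ‖g‖ ^ 2 ≤ ∑' i, ‖c i‖ ^ 2) (hc : ∀ i, c i = 0) : g = 0 := by
  simp only [hc, norm_zero, ne_eq, OfNat.ofNat_ne_zero, not_false_eq_true, zero_pow,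
    tsum_zero] at hle
  have hsq : ‖g‖ ^ 2 ≤ 0 := nonpos_of_mul_nonpos_right hle hA
  exact norm_eq_zero.mp (sq_nonpos_iff _ |>.mp hsq)

open AddCircle in
theorem stmt13_general {T : ℝ} [Fact (0 < T)] {φ f : AddCircle T → ℂ}
    (hφ : MemLp φ 2 haarAddCircle) (hφ_an : IsAnalyticType φ)
    (hφf : ∀ n : ℕ, MemLp (fun x ↦ φ x ^ n * f x) 2 haarAddCircle) (hf_an : IsAnalyticType f)
    (hcomplete : ∀ g : Lp ℂ 2 (haarAddCircle (T := T)), IsAnalyticType g →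
      (∀ n : ℕ, ∫ x, g x * conj (φ x ^ n * f x) ∂haarAddCircle = 0) → g = 0)
    {z : ℂ} (hz : ‖z‖ < 1) : diskExtension f z ≠ 0 := by
  intro hfz
  refine szegoKernel_ne_zero hz <|
    hcomplete (szegoKernel T z) (isAnalyticType_szegoKernel hz) fun n ↦ ?_
  rw [integral_szegoKernel_mul_conj hz (hφf n), diskExtension_pow_mul hφ hφ_an hφf hf_an hz, hfz,
    mul_zero, map_zero]

theorem stmt13 (φ : AddCircle (2 * Real.pi) → ℂ) (hφmeas : Measurable φ)
    (hφbdd : ∃ C : ℝ, ∀ x, ‖φ x‖ ≤ C)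
    (hφH : ∀ n : ℤ, n < 0 → fourierCoeff φ n = 0)
    (f : Lp ℂ 2 μC)
    (hf : ∀ n : ℤ, n < 0 → fourierCoeff (f : AddCircle (2 * Real.pi) → ℂ) n = 0)
    (hframe : ∃ A B : ℝ, 0 < A ∧ 0 < B ∧ ∀ g : Lp ℂ 2 μC,
      (∀ n : ℤ, n < 0 → fourierCoeff (g : AddCircle (2 * Real.pi) → ℂ) n = 0) →
      A * ‖g‖ ^ 2 ≤ ∑' n : ℕ,
          ‖∫ x, (g : AddCircle (2 * Real.pi) → ℂ) x *
            conj (φ x ^ n * (f : AddCircle (2 * Real.pi) → ℂ) x) ∂μC‖ ^ 2 ∧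
        ∑' n : ℕ,
          ‖∫ x, (g : AddCircle (2 * Real.pi) → ℂ) x *
            conj (φ x ^ n * (f : AddCircle (2 * Real.pi) → ℂ) x) ∂μC‖ ^ 2 ≤ B * ‖g‖ ^ 2) :
    ∀ z₀ : ℂ, ‖z₀‖ < 1 →
      ∑' n : ℕ, fourierCoeff (f : AddCircle (2 * Real.pi) → ℂ) (n : ℤ) * z₀ ^ n ≠ 0 := by
  obtain ⟨C, hC⟩ := hφbdd
  obtain ⟨A, B, hA, -, hAB⟩ := hframe
  have hφ : MemLp φ ⊤ AddCircle.haarAddCircle :=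
    memLp_top_of_bound hφmeas.aestronglyMeasurable C (ae_of_all _ hC)
  exact fun z₀ ↦ stmt13_general (hφ.mono_exponent le_top) hφH (memLp_pow_mul hφ (Lp.memLp f)) hf
    fun g hg ↦ eq_zero_of_mul_sq_norm_le_tsum hA (hAB g hg).1
end
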